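/- Let φ : X → Y be a finitely monotone continuous surjection from an unshielded planar compactum X onto a finitely Suslinian compactum Y. If C ⊂ X is a limit continuum, then φ(C) is a single point. -/

import Mathlib

open Set Filter Metric Topology Function

/-- A relation on a topological space is closed if its graph is closed. -/
def ClosedRel {Y : Type*} [TopologicalSpace Y] (r : Y → Y → Prop) : Prop :=
  IsClosed {p : Y × Y | r p.1 p.2}

/-- A relation respects a family `A` of subsets if it is closed and each member of `A`
is contained in a single class. -/
def Respects {Y : Type*} [TopologicalSpace Y] (A : Set (Set Y)) (r : Y → Y → Prop) : Prop :=
  ClosedRel r ∧ ∀ a ∈ A, ∀ x ∈ a, ∀ y ∈ a, r x y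

/-- The finest closed equivalence relation respecting `A`: the intersection of all
closed equivalence relations respecting `A`. -/
def finestRel {Y : Type*} [TopologicalSpace Y] (A : Set (Set Y)) : Y → Y → Prop :=
  fun x y => ∀ r : Y → Y → Prop, Equivalence r → Respects A r → r x y

/-- A limit continuum: a subcontinuum which is the Hausdorff limit of a sequence of
pairwise disjoint subcontinua. -/
def IsLimCont {Y : Type*} [MetricSpace Y] (C : Set Y) : Prop :=
  IsCompact C ∧ IsConnected C ∧
  ∃ F : ℕ → Set Y, (∀ n, IsCompact (F n) ∧ IsConnected (F n)) ∧
    Pairwise (Disjoint on F) ∧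
    Tendsto (fun n => EMetric.hausdorffEdist (F n) C) atTop (nhds 0)

/-- Finitely Suslinian: every family of pairwise disjoint subcontinua of diameter at least
`ε > 0` is finite. -/
def FinSus (Y : Type*) [MetricSpace Y] : Prop :=
  ∀ ε : ℝ, 0 < ε → ∀ S : Set (Set Y),
    (∀ C ∈ S, IsCompact C ∧ IsConnected C ∧ ε ≤ Metric.diam C) →
    S.Pairwise Disjoint → S.Finite

/-- A subcontinuum of the subset `Z`. -/
def SubcontIn {E : Type*} [MetricSpace E] (Z C : Set E) : Prop :=
  C ⊆ Z ∧ IsCompact C ∧ IsConnected C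

/-- A limit continuum of the subset `Z`. -/
def LimContIn {E : Type*} [MetricSpace E] (Z C : Set E) : Prop :=
  SubcontIn Z C ∧ ∃ F : ℕ → Set E, (∀ n, SubcontIn Z (F n)) ∧
    Pairwise (Disjoint on F) ∧
    Tendsto (fun n => EMetric.hausdorffEdist (F n) C) atTop (nhds 0)

/-- The subset `Z` is finitely Suslinian. -/
def FinSusIn {E : Type*} [MetricSpace E] (Z : Set E) : Prop :=
  ∀ ε : ℝ, 0 < ε → ∀ S : Set (Set E),
    (∀ C ∈ S, SubcontIn Z C ∧ ε ≤ Metric.diam C) → S.Pairwise Disjoint → S.Finite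

/-- A planar compactum is unshielded if it is the boundary of the unbounded component of
its complement. -/
def Unshielded (X : Set ℂ) : Prop :=
  ∀ z, z ∉ X → ¬Bornology.IsBounded (connectedComponentIn Xᶜ z) →
    X = frontier (connectedComponentIn Xᶜ z)

open Complex in
/-- A continuous nonvanishing function on the unit square has a continuous logarithm. -/
lemma exists_continuous_log_square {f : unitInterval × unitInterval → ℂ} (hf : Continuous f)
    (h0 : ∀ a, f a ≠ 0) :
    ∃ L : unitInterval × unitInterval → ℂ, Continuous L ∧ ∀ a, exp (L a) = f a := by
  let r : ℝ → unitInterval := projIcc 0 1 zero_le_one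
  have hr : Continuous r := continuous_projIcc
  obtain ⟨L, ⟨-, hL⟩, -⟩ := isCoveringMap_exp.existsUnique_continuousMap_lifts
    ⟨fun x : ℝ × ℝ => (⟨f (r x.1, r x.2), h0 _⟩ : {z : ℂ // z ≠ 0}), by fun_prop⟩ 0
    (log (f (r 0, r 0))) (Subtype.ext (exp_log (h0 _)))
  refine ⟨fun a => L (a.1, a.2), by fun_prop, fun a => ?_⟩
  have := congrArg Subtype.val (congrFun hL ((a.1 : ℝ), (a.2 : ℝ)))
  simpa [r] using this

open Classical in
/-- The total change of a continuous logarithm of `p` over the unit interval. -/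
noncomputable def logChange (p : unitInterval → ℂ) : ℂ :=
  if h : ∃ L : unitInterval → ℂ, Continuous L ∧ ∀ t, Complex.exp (L t) = p t then
    h.choose 1 - h.choose 0
  else 0

lemma logChange_eq {p L : unitInterval → ℂ} (hL : Continuous L)
    (h : ∀ t, Complex.exp (L t) = p t) : logChange p = L 1 - L 0 := by
  have hex : ∃ L : unitInterval → ℂ, Continuous L ∧ ∀ t, Complex.exp (L t) = p t := ⟨L, hL, h⟩
  rw [logChange, dif_pos hex]
  obtain ⟨hM, hMp⟩ := hex.choose_spec
  set M := hex.choose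
  have key : (fun t => M t + (L 0 - M 0)) = L := by
    refine Complex.isCoveringMap_exp.eq_of_comp_eq (by fun_prop) hL ?_ 0 (by simp)
    ext t
    simp only [comp_apply]
    rw [Complex.exp_add, Complex.exp_sub, hMp, h, hMp, h, div_self, mul_one]
    rw [← h 0]
    exact Complex.exp_ne_zero _
  have h1 := congrFun key 1
  rw [← h1]
  ring

lemma exp_logChange {p : unitInterval → ℂ} (hp : Continuous p) (h0 : ∀ t, p t ≠ 0) :
    Complex.exp (logChange p) = p 1 / p 0 := by
  obtain ⟨L, hL, h⟩ := exists_continuous_log_square (f := fun x => p x.1) (by fun_prop)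
    (fun x => h0 x.1)
  rw [logChange_eq (L := fun t => L (t, 0)) (by fun_prop) (fun t => h (t, 0)), Complex.exp_sub,
    h, h]

/-- For two disjoint paths, the logarithm of their difference is defined on the whole square,
so that its changes along the four sides of the square are related. -/
lemma logChange_square {p q : unitInterval → ℂ} (hp : Continuous p) (hq : Continuous q)
    (hpq : ∀ s t, p s ≠ q t) :
    logChange (fun s => p s - q 0) + logChange (fun t => q t - p 1) =
      logChange (fun t => q t - p 0) + logChange (fun s => p s - q 1) := by
  obtain ⟨L, hL, h⟩ := exists_continuous_log_square
    (f := fun x => p x.1 - q x.2) (by fun_prop) (fun x => sub_ne_zero.2 (hpq _ _))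
  have hleft : ∀ t, logChange (fun s => p s - q t) = L (1, t) - L (0, t) := fun t =>
    logChange_eq (L := fun s => L (s, t)) (by fun_prop) (fun s => h (s, t))
  have hright : ∀ s, logChange (fun t => q t - p s) = L (s, 1) - L (s, 0) := fun s => by
    rw [logChange_eq (L := fun t => L (s, t) + Real.pi * Complex.I) (by fun_prop)]
    · ring
    · intro t
      rw [Complex.exp_add, Complex.exp_pi_mul_I, h]
      ring
  rw [hleft, hleft, hright, hright]
  ring

/-- The complete bipartite graph on three and three vertices cannot be drawn in the plane with
nonadjacent edges disjoint. -/
lemma not_disjoint_of_paths_three_three {f k : Fin 3 → ℂ} (e : ∀ i a, Path (f i) (k a))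
    (he : ∀ i j a b, i ≠ j → a ≠ b → ∀ s t, e i a s ≠ e j b t) : False := by
  have hsq : ∀ i j a b, i ≠ j → a ≠ b →
      logChange (fun s => e i a s - f j) + logChange (fun t => e j b t - k a) =
      logChange (fun t => e j b t - f i) + logChange (fun s => e i a s - k b) := by
    intro i j a b hij hab
    simpa using logChange_square (e i a).continuous (e j b).continuous (he i j a b hij hab)
  have hexp : ∀ i j, i ≠ j →
      Complex.exp (logChange (fun s => e i 0 s - f j)) = (k 0 - f j) / (f i - f j) := by
    intro i j hij
    have := exp_logChange (p := fun s => e i 0 s - f j) (by fun_prop) (fun s => by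
      simpa [sub_ne_zero] using he i j 0 1 hij (by decide) s 0)
    simpa using this
  have hff : ∀ i j, i ≠ j → f i - f j ≠ 0 := fun i j hij => by
    simpa [sub_ne_zero] using he i j 0 1 hij (by decide) 0 0
  have hkf : ∀ j, k 0 - f j ≠ 0 := fun j => by
    simpa [sub_ne_zero] using he (j + 1) j 0 1 (by simp) (by decide) 1 0
  have key : logChange (fun s => e 1 0 s - f 0) + logChange (fun s => e 2 0 s - f 1) +
      logChange (fun s => e 0 0 s - f 2) = logChange (fun s => e 0 0 s - f 1) +
      logChange (fun s => e 1 0 s - f 2) + logChange (fun s => e 2 0 s - f 0) := by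
    linear_combination (1 / 2 : ℂ) * (
      ((hsq 1 0 0 1 (by decide) (by decide) + hsq 0 1 1 2 (by decide) (by decide)
        - hsq 0 1 0 2 (by decide) (by decide)) -
        (hsq 0 1 0 1 (by decide) (by decide) + hsq 1 0 1 2 (by decide) (by decide)
        - hsq 1 0 0 2 (by decide) (by decide)))
      + ((hsq 2 1 0 1 (by decide) (by decide) + hsq 1 2 1 2 (by decide) (by decide)
        - hsq 1 2 0 2 (by decide) (by decide)) -
        (hsq 1 2 0 1 (by decide) (by decide) + hsq 2 1 1 2 (by decide) (by decide)
        - hsq 2 1 0 2 (by decide) (by decide)))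
      + ((hsq 0 2 0 1 (by decide) (by decide) + hsq 2 0 1 2 (by decide) (by decide)
        - hsq 2 0 0 2 (by decide) (by decide)) -
        (hsq 2 0 0 1 (by decide) (by decide) + hsq 0 2 1 2 (by decide) (by decide)
        - hsq 0 2 0 2 (by decide) (by decide))))
  have := congrArg Complex.exp key
  simp only [Complex.exp_add] at this
  rw [hexp _ _ (by decide), hexp _ _ (by decide), hexp _ _ (by decide), hexp _ _ (by decide),
    hexp _ _ (by decide), hexp _ _ (by decide)] at this
  have h01 := hff 0 1 (by decide)
  have h12 := hff 1 2 (by decide)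
  have h20 := hff 2 0 (by decide)
  rw [← neg_sub (f 0) (f 1), ← neg_sub (f 1) (f 2), ← neg_sub (f 2) (f 0)] at this
  have h0 := hkf 0
  have h1 := hkf 1
  have h2 := hkf 2
  set u := f 0 - f 1
  set v := f 1 - f 2
  set w := f 2 - f 0
  field_simp at this
  norm_num at this

lemma isPathConnected_thickening {s : Set ℂ} (hs : IsConnected s) {ε : ℝ} (hε : 0 < ε) :
    IsPathConnected (thickening ε s) := by
  rw [← isOpen_thickening.isConnected_iff_isPathConnected, ← add_ball_zero]
  rw [← Set.image2_add, ← Set.image_prod]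
  exact (hs.prod ((convex_ball (0 : ℂ) ε).isConnected ⟨0, by simpa⟩)).image _ (by fun_prop)

lemma joinedIn_infDist_le {K : Set ℂ} (hK : IsCompact K) (hKc : IsConnected K) {ε : ℝ}
    (hε : 0 < ε) {z k : ℂ} (hz : infDist z K ≤ ε) (hk : k ∈ K) :
    JoinedIn {x | infDist x K ≤ ε} z k := by
  obtain ⟨y, hyK, hy⟩ := hK.exists_infDist_eq_dist hKc.nonempty z
  have hzy : JoinedIn {x | infDist x K ≤ ε} z y := by
    refine JoinedIn.of_segment_subset fun x hx => ?_
    have hx' : x ∈ closedBall y ε :=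
      (convex_closedBall y ε).segment_subset (by simpa [← hy]) (by simpa using hε.le) hx
    exact (infDist_le_dist_of_mem hyK).trans hx'
  refine hzy.trans (((isPathConnected_thickening hKc hε).joinedIn y
    (self_subset_thickening hε K hyK) k (self_subset_thickening hε K hk)).mono fun x hx => ?_)
  exact ((mem_thickening_iff_infDist_lt hKc.nonempty).1 hx).le

/-- An interval joining the region where `g₁` is small to the one where `g₂` is small can be
trimmed so that `g₁` and `g₂` are small at its respective ends only. -/
lemma exists_trimmed_interval {g₁ g₂ : ℝ → ℝ} (h₁ : Continuous g₁) (h₂ : Continuous g₂) {ε : ℝ}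
    (h0 : g₁ 0 ≤ ε) (h1 : g₂ 1 ≤ ε) (hs : ∀ t, 2 * ε < g₁ t + g₂ t) :
    ∃ s m t, s ≤ m ∧ m ≤ t ∧ g₁ s ≤ ε ∧ g₂ t ≤ ε ∧ g₁ m = g₂ m ∧
      (∀ τ ∈ Icc s m, ε < g₂ τ) ∧ ∀ τ ∈ Icc m t, ε < g₁ τ := by
  obtain ⟨s, ⟨⟨hs0, hs1⟩, hsε⟩, hsmax⟩ := (isCompact_Icc.inter_right
    (isClosed_le h₁ continuous_const) :
      IsCompact (Icc (0 : ℝ) 1 ∩ {x | g₁ x ≤ ε})).exists_isGreatest ⟨0, by simp, h0⟩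
  obtain ⟨t, ⟨⟨ht0, ht1⟩, htε⟩, htmin⟩ := (isCompact_Icc.inter_right
    (isClosed_le h₂ continuous_const) : IsCompact (Icc s 1 ∩ {x | g₂ x ≤ ε})).exists_isLeast
    ⟨1, by simp [hs1], h1⟩
  simp only [mem_ofPred_eq] at hsε htε
  obtain ⟨m, ⟨hm0, hm1⟩, hm⟩ := intermediate_value_Icc ht0
    (f := fun x => g₁ x - g₂ x) (by fun_prop) (show (0 : ℝ) ∈ _ from
      ⟨by linarith [hs s], by linarith [hs t]⟩)
  refine ⟨s, m, t, hm0, hm1, hsε, htε, by linarith, fun τ hτ => ?_, fun τ hτ => ?_⟩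
  · by_contra! hcon
    have hle : t ≤ τ := htmin ⟨⟨hτ.1, by linarith [hτ.2]⟩, hcon⟩
    obtain rfl : m = t := le_antisymm hm1 (hle.trans hτ.2)
    linarith [hs m]
  · by_contra! hcon
    have hle : τ ≤ s := hsmax ⟨⟨by linarith [hτ.1], by linarith [hτ.2]⟩, hcon⟩
    obtain rfl : s = m := le_antisymm hm0 (hτ.1.trans hle)
    linarith [hs s]

lemma joinedIn_of_continuous_Icc {γ : ℝ → ℂ} (hγ : Continuous γ) {a b : ℝ} (hab : a ≤ b)
    {S : Set ℂ} (h : ∀ t ∈ Icc a b, γ t ∈ S) : JoinedIn S (γ a) (γ b) :=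
  ((((convex_Icc a b).isPathConnected ⟨a, by simp [hab]⟩).image hγ).joinedIn _
    (mem_image_of_mem γ (left_mem_Icc.2 hab)) _ (mem_image_of_mem γ (right_mem_Icc.2 hab))).mono
    (image_subset_iff.2 h)

/-- Near a connected set meeting both `K₁` and `K₂` there is a point equidistant from `K₁` and `K₂`
that can be joined to `K₁` away from `K₂` and to `K₂` away from `K₁`. -/
lemma exists_equidistant_joinedIn {F K₁ K₂ : Set ℂ} (hF : IsConnected F)
    (hK₁ : IsCompact K₁) (hK₁c : IsConnected K₁) (hK₂ : IsCompact K₂) (hK₂c : IsConnected K₂)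
    (h₁ : (F ∩ K₁).Nonempty) (h₂ : (F ∩ K₂).Nonempty) {ε : ℝ} (hε : 0 < ε)
    (hsep : ∀ x, 2 * ε < infDist x K₁ + infDist x K₂) {k₁ k₂ : ℂ} (hk₁ : k₁ ∈ K₁) (hk₂ : k₂ ∈ K₂) :
    ∃ m ∈ thickening ε F, infDist m K₁ = infDist m K₂ ∧
      JoinedIn ((thickening ε F ∩ {x | ε < infDist x K₂}) ∪ {x | infDist x K₁ ≤ ε}) m k₁ ∧
      JoinedIn ((thickening ε F ∩ {x | ε < infDist x K₁}) ∪ {x | infDist x K₂ ≤ ε}) m k₂ := by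
  obtain ⟨x, hxF, hx⟩ := h₁
  obtain ⟨y, hyF, hy⟩ := h₂
  obtain ⟨γ, hγ⟩ := (isPathConnected_thickening hF hε).joinedIn x
    (self_subset_thickening hε F hxF) y (self_subset_thickening hε F hyF)
  have hγF : ∀ t, γ.extend t ∈ thickening ε F := fun t => hγ _
  have hc : Continuous γ.extend := γ.continuous_extend
  obtain ⟨s, m, t, hsm, hmt, hs, ht, hm, hsm', hmt'⟩ := exists_trimmed_interval
    (g₁ := fun t => infDist (γ.extend t) K₁) (g₂ := fun t => infDist (γ.extend t) K₂)
    ((continuous_infDist_pt K₁).comp hc) ((continuous_infDist_pt K₂).comp hc)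
    (by simpa [infDist_zero_of_mem hx] using hε.le) (by simpa [infDist_zero_of_mem hy] using hε.le)
    (fun t => hsep _)
  refine ⟨γ.extend m, hγF m, hm, ?_, ?_⟩
  · exact (joinedIn_of_continuous_Icc hc hsm fun τ hτ => Or.inl ⟨hγF τ, hsm' τ hτ⟩).symm.trans
      ((joinedIn_infDist_le hK₁ hK₁c hε hs hk₁).mono subset_union_right)
  · exact (joinedIn_of_continuous_Icc hc hmt fun τ hτ => Or.inl ⟨hγF τ, hmt' τ hτ⟩).trans
      ((joinedIn_infDist_le hK₂ hK₂c hε ht hk₂).mono subset_union_right)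

lemma eventually_forall_lt_dist {A B : Set ℂ} (hA : IsCompact A) (hB : IsCompact B)
    (hAB : Disjoint A B) : ∀ᶠ δ in 𝓝[>] (0 : ℝ), ∀ x ∈ A, ∀ y ∈ B, δ < dist x y := by
  obtain ⟨r, hr, h⟩ := exists_pos_forall_lt_edist hA hB.isClosed hAB
  filter_upwards [Ioo_mem_nhdsGT (show (0 : ℝ) < r from hr)] with δ hδ x hx y hy
  have := h x hx y hy
  rw [edist_nndist, ENNReal.coe_lt_coe] at this
  exact hδ.2.trans (by exact_mod_cast this)

/-- If `U` is connected and open, then three disjoint continua in the boundary of `U` cannot all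
meet each of two disjoint continua in the boundary of `U`. -/
lemma not_three_continua_meet_two {X U K₁ K₂ : Set ℂ} (hX : IsCompact X) (hU : IsOpen U)
    (hUc : IsConnected U) (hUX : Disjoint U X) (hXU : X ⊆ closure U)
    (hK₁ : IsCompact K₁) (hK₁c : IsConnected K₁) (hK₁X : K₁ ⊆ X)
    (hK₂ : IsCompact K₂) (hK₂c : IsConnected K₂) (hK₂X : K₂ ⊆ X) (hK : Disjoint K₁ K₂)
    {F : Fin 3 → Set ℂ} (hF : ∀ i, IsCompact (F i)) (hFc : ∀ i, IsConnected (F i))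
    (hFX : ∀ i, F i ⊆ X) (hFd : Pairwise (Disjoint on F))
    (h₁ : ∀ i, (F i ∩ K₁).Nonempty) (h₂ : ∀ i, (F i ∩ K₂).Nonempty) : False := by
  obtain ⟨δ, ⟨hδK, hδF⟩, hδ⟩ : ∃ δ : ℝ, ((∀ x ∈ K₁, ∀ y ∈ K₂, δ < dist x y) ∧
      ∀ i j, i ≠ j → ∀ x ∈ F i, ∀ y ∈ F j, δ < dist x y) ∧ 0 < δ := by
    refine (((eventually_forall_lt_dist hK₁ hK₂ hK).and (eventually_all.2 fun i => eventually_all.2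
      fun j => ?_)).and self_mem_nhdsWithin).exists
    by_cases hij : i = j
    · simp [hij]
    · simpa [hij] using eventually_forall_lt_dist (hF i) (hF j) (hFd hij)
  have hsum : ∀ x, δ < infDist x K₁ + infDist x K₂ := fun x => by
    obtain ⟨y, hy, hxy⟩ := hK₁.exists_infDist_eq_dist hK₁c.nonempty x
    obtain ⟨z, hz, hxz⟩ := hK₂.exists_infDist_eq_dist hK₂c.nonempty x
    rw [hxy, hxz]
    exact (hδK y hy z hz).trans_le (dist_triangle_left _ _ _)
  obtain ⟨t, htX, htf, ht⟩ := hX.finite_cover_balls (show 0 < δ / 32 by positivity)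
  have hnear : ∀ c ∈ X, ∃ u ∈ U, dist c u < δ / 32 := fun c hc =>
    Metric.mem_closure_iff.1 (hXU hc) _ (by positivity)
  choose! u huU hu using hnear
  obtain ⟨o, hoU⟩ := hUc.nonempty
  have hpath : ∀ c ∈ X, ∃ R ⊆ U, IsCompact R ∧ JoinedIn R (u c) o := fun c hc => by
    obtain ⟨γ, hγ⟩ := (hU.isConnected_iff_isPathConnected.1 hUc).joinedIn _ (huU c hc) _ hoU
    exact ⟨range γ, range_subset_iff.2 hγ, isCompact_range γ.continuous, γ, mem_range_self⟩
  choose! R hRU hRc hR using hpath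
  set P : Set ℂ := ⋃ c ∈ t, R c
  have hPc : IsCompact P := htf.isCompact_biUnion fun c hc => hRc c (htX hc)
  have hPU : P ⊆ U := iUnion₂_subset fun c hc => hRU c (htX hc)
  obtain ⟨ε, ⟨hεP, hεδ⟩, hε⟩ :
      ∃ ε : ℝ, ((∀ x ∈ P, ∀ y ∈ X, ε < dist x y) ∧ ε < δ / 16) ∧ 0 < ε :=
    (((eventually_forall_lt_dist hPc hX (hUX.mono_left hPU)).and
      (mem_of_superset (Ioo_mem_nhdsGT (show (0 : ℝ) < δ / 16 by positivity)) fun _ h => h.2)).and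
      self_mem_nhdsWithin).exists
  obtain ⟨k₁, hk₁⟩ := hK₁c.nonempty
  obtain ⟨k₂, hk₂⟩ := hK₂c.nonempty
  choose m hmF hm hm₁ hm₂ using fun i => exists_equidistant_joinedIn (hFc i) hK₁ hK₁c hK₂ hK₂c
    (h₁ i) (h₂ i) hε (fun x => (by linarith : 2 * ε < δ).trans (hsum x)) hk₁ hk₂
  choose x hxF hx using fun i => mem_thickening_iff.1 (hmF i)
  have hm₃ : ∀ i, JoinedIn (ball (m i) (δ / 8) ∪ P) (m i) o := fun i => by
    obtain ⟨c, hct, hc⟩ := mem_iUnion₂.1 (ht (hFX i (hxF i)))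
    have hcX := htX hct
    have hmu : dist (u c) (m i) < δ / 8 := by
      have := dist_triangle4 (u c) c (x i) (m i)
      have := hu c hcX
      rw [mem_ball] at hc
      linarith [dist_comm (u c) c, dist_comm c (x i), dist_comm (x i) (m i), hx i]
    have hseg : JoinedIn (ball (m i) (δ / 8)) (m i) (u c) := JoinedIn.of_segment_subset
      ((convex_ball _ _).segment_subset (mem_ball_self (by positivity)) hmu)
    exact (hseg.mono subset_union_left).trans
      ((hR c hcX).mono ((subset_biUnion_of_mem hct).trans subset_union_right))
  let A : Fin 3 → Fin 3 → Set ℂ := fun i =>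
    ![(thickening ε (F i) ∩ {x | ε < infDist x K₂}) ∪ {x | infDist x K₁ ≤ ε},
      (thickening ε (F i) ∩ {x | ε < infDist x K₁}) ∪ {x | infDist x K₂ ≤ ε},
      ball (m i) (δ / 8) ∪ P]
  have hJ : ∀ i a, JoinedIn (A i a) (m i) (![k₁, k₂, o] a) := by
    intro i a
    fin_cases a
    exacts [hm₁ i, hm₂ i, hm₃ i]
  have hthick : ∀ i j, i ≠ j → ∀ z ∈ thickening ε (F i), z ∉ thickening ε (F j) := by
    intro i j hij z hi hj
    obtain ⟨y, hy, hzy⟩ := mem_thickening_iff.1 hi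
    obtain ⟨w, hw, hzw⟩ := mem_thickening_iff.1 hj
    linarith [hδF i j hij y hy w hw, dist_triangle_left y w z]
  have hball : ∀ i j, i ≠ j → ∀ z ∈ thickening ε (F i), z ∉ ball (m j) (δ / 8) ∪ P := by
    rintro i j hij z hi hj
    obtain ⟨y, hy, hzy⟩ := mem_thickening_iff.1 hi
    rcases hj with hj | hj
    · rw [mem_ball] at hj
      linarith [hδF i j hij y hy _ (hxF j), dist_triangle_left y (x j) z,
        dist_triangle z (m j) (x j), hx j]
    · linarith [hεP z hj y (hFX i hy)]
  have hcont : ∀ K : Set ℂ, IsCompact K → K.Nonempty → K ⊆ X → (∀ j, δ / 2 < infDist (m j) K) →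
      ∀ j z, infDist z K ≤ ε → z ∉ ball (m j) (δ / 8) ∪ P := by
    rintro K hK hne hKX hmK j z hz (hj | hj)
    · rw [mem_ball'] at hj
      linarith [hmK j, infDist_le_infDist_add_dist (s := K) (x := m j) (y := z)]
    · obtain ⟨y, hy, hzy⟩ := hK.exists_infDist_eq_dist hne z
      linarith [hεP z hj y (hKX hy)]
  have hcont₁ := hcont K₁ hK₁ hK₁c.nonempty hK₁X fun j => by linarith [hsum (m j), hm j]
  have hcont₂ := hcont K₂ hK₂ hK₂c.nonempty hK₂X fun j => by linarith [hsum (m j), hm j]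
  have h01 : ∀ i j, i ≠ j → ∀ z ∈ A i 0, z ∉ A j 1 := by
    rintro i j hij z (⟨hi, hi'⟩ | hi) (⟨hj, hj'⟩ | hj)
    · exact hthick i j hij z hi hj
    · exact (not_le.2 (show ε < infDist z K₂ from hi')) hj
    · exact (not_le.2 (show ε < infDist z K₁ from hj')) hi
    · simp only [mem_ofPred_eq] at hi hj
      linarith [hsum z]
  have h02 : ∀ i j, i ≠ j → ∀ z ∈ A i 0, z ∉ A j 2 := by
    rintro i j hij z (⟨hi, -⟩ | hi)
    exacts [hball i j hij z hi, hcont₁ j z hi]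
  have h12 : ∀ i j, i ≠ j → ∀ z ∈ A i 1, z ∉ A j 2 := by
    rintro i j hij z (⟨hi, -⟩ | hi)
    exacts [hball i j hij z hi, hcont₂ j z hi]
  refine not_disjoint_of_paths_three_three (fun i a => (hJ i a).somePath)
    fun i j a b hij hab s t hst => ?_
  have hs := (hJ i a).somePath_mem s
  have ht := (hJ j b).somePath_mem t
  rw [← hst] at ht
  generalize (hJ i a).somePath s = z at hs ht
  fin_cases a <;> fin_cases b
  all_goals first
    | exact absurd rfl hab
    | exact h01 i j hij z hs ht
    | exact h02 i j hij z hs ht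
    | exact h12 i j hij z hs ht
    | exact h01 j i hij.symm z ht hs
    | exact h02 j i hij.symm z ht hs
    | exact h12 j i hij.symm z ht hs

/-- A continuum which meets the open ball of radius `r` and leaves the closed ball of radius `2r`
contains a continuum of diameter at least `r` inside the latter. -/
lemma exists_continuum_subset_closedBall {Y : Type*} [MetricSpace Y] {A : Set Y} (hA : IsCompact A)
    (hAc : IsConnected A) {a p q : Y} {r : ℝ} (hp : p ∈ A) (hpa : dist p a < r) (hq : q ∈ A)
    (hqa : 2 * r < dist q a) :
    ∃ B, IsCompact B ∧ IsConnected B ∧ B ⊆ A ∧ B ⊆ closedBall a (2 * r) ∧ r ≤ diam B := by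
  have hr : 0 < r := dist_nonneg.trans_lt hpa
  set H : Set Y := A ∩ closedBall a (2 * r)
  have hHc : IsCompact H := hA.inter_right isClosed_closedBall
  have := isCompact_iff_compactSpace.1 hHc
  have hpH : p ∈ H := ⟨hp, by rw [mem_closedBall]; linarith⟩
  let p' : H := ⟨p, hpH⟩
  set B : Set Y := Subtype.val '' connectedComponent p'
  have hBc : IsCompact B := isClosed_connectedComponent.isCompact.image continuous_subtype_val
  have hBH : B ⊆ H := Subtype.coe_image_subset _ _
  refine ⟨B, hBc, isConnected_connectedComponent.image _ continuous_subtype_val.continuousOn,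
    hBH.trans inter_subset_left, hBH.trans inter_subset_right, ?_⟩
  have hpB : p ∈ B := ⟨p', mem_connectedComponent, rfl⟩
  suffices h : ∃ z ∈ B, 2 * r ≤ dist z a by
    obtain ⟨z, hz, hza⟩ := h
    refine le_trans ?_ (dist_le_diam_of_mem hBc.isBounded hz hpB)
    linarith [dist_triangle z p a]
  by_contra! hlt
  have hopen : IsOpen {z : H | dist (z : Y) a < 2 * r} :=
    isOpen_lt (by fun_prop) continuous_const
  obtain ⟨⟨V, hV, hpV⟩, hVlt⟩ : ∃ V : {s : Set H // IsClopen s ∧ p' ∈ s},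
      (V : Set H) ⊆ {z : H | dist (z : Y) a < 2 * r} := by
    have : Nonempty {s : Set H // IsClopen s ∧ p' ∈ s} := ⟨⟨univ, isClopen_univ, mem_univ _⟩⟩
    refine exists_subset_nhds_of_isCompact' (V := fun s : {s : Set H // IsClopen s ∧ p' ∈ s} => s.1)
      ?_ (fun s => s.2.1.isClosed.isCompact) (fun s => s.2.1.isClosed) fun z hz => ?_
    · rintro ⟨s, hs, hps⟩ ⟨t, ht, hpt⟩
      exact ⟨⟨s ∩ t, hs.inter ht, hps, hpt⟩, inter_subset_left, inter_subset_right⟩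
    · rw [← connectedComponent_eq_iInter_isClopen] at hz
      exact hopen.mem_nhds (hlt z ⟨z, hz, rfl⟩)
  have hVcl : IsClosed (Subtype.val '' V) :=
    (hV.isClosed.isCompact.image continuous_subtype_val).isClosed
  have hWcl : IsClosed (Subtype.val '' Vᶜ ∪ {z | 2 * r ≤ dist z a}) :=
    ((hV.compl.isClosed.isCompact.image continuous_subtype_val).isClosed).union
      (isClosed_le continuous_const (by fun_prop))
  have hcover : A ⊆ Subtype.val '' V ∪ (Subtype.val '' Vᶜ ∪ {z | 2 * r ≤ dist z a}) := by
    intro z hz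
    by_cases hza : 2 * r ≤ dist z a
    · exact Or.inr (Or.inr hza)
    · have hzH : z ∈ H := ⟨hz, (not_le.1 hza).le⟩
      by_cases hzV : (⟨z, hzH⟩ : H) ∈ V
      · exact Or.inl ⟨_, hzV, rfl⟩
      · exact Or.inr (Or.inl ⟨_, hzV, rfl⟩)
  obtain ⟨_, -, ⟨v, hv, rfl⟩, hz⟩ := isPreconnected_closed_iff.1 hAc.isPreconnected _ _ hVcl hWcl
    hcover ⟨p, hp, p', hpV, rfl⟩ ⟨q, hq, Or.inr hqa.le⟩
  rcases hz with ⟨w, hw, hwv⟩ | hz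
  · exact hw (Subtype.val_injective hwv ▸ hv)
  · exact (not_le.2 (show dist (v : Y) a < 2 * r from hVlt hv)) hz

/-- In a finitely Suslinian space, some continuum near `a` meets infinitely many members of a
sequence of continua which come close to `a` and move away from it. -/
lemma FinSus.exists_continuum_meeting_infinite {Y : Type*} [MetricSpace Y] (hY : FinSus Y)
    {A : ℕ → Set Y} {N : Set ℕ} (hN : N.Infinite) (hA : ∀ n, IsCompact (A n))
    (hAc : ∀ n, IsConnected (A n)) {a : Y} {r : ℝ} (hr : 0 < r)
    (hnear : ∀ n ∈ N, ∃ p ∈ A n, dist p a < r) (hfar : ∀ n ∈ N, ∃ q ∈ A n, 2 * r < dist q a) :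
    ∃ Z, IsCompact Z ∧ IsConnected Z ∧ Z ⊆ closedBall a (2 * r) ∧
      ∃ N' ⊆ N, N'.Infinite ∧ ∀ n ∈ N', (A n ∩ Z).Nonempty := by
  have hB : ∀ n ∈ N, ∃ B, IsCompact B ∧ IsConnected B ∧ B ⊆ A n ∧ B ⊆ closedBall a (2 * r) ∧
      r ≤ diam B := fun n hn => by
    obtain ⟨p, hp, hpa⟩ := hnear n hn
    obtain ⟨q, hq, hqa⟩ := hfar n hn
    exact exists_continuum_subset_closedBall (hA n) (hAc n) hp hpa hq hqa
  choose! B hBc hBcon hBA hBa hBd using hB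
  by_cases hfin : ∀ m ∈ N, {n ∈ N | (B n ∩ B m).Nonempty}.Finite
  · have : Std.Symm fun m n => Disjoint (B m) (B n) := ⟨fun _ _ h => h.symm⟩
    obtain ⟨f, hfN, hf⟩ := exists_seq_of_forall_finset_exists' (fun n => n ∈ N)
      (fun m n => Disjoint (B m) (B n)) fun s hs => by
        obtain ⟨n, hn, hns⟩ :=
          (hN.sdiff (s.finite_toSet.biUnion fun m hm => hfin m (hs m hm))).nonempty
        refine ⟨n, hn, fun m hm => ?_⟩
        rw [disjoint_comm, Set.disjoint_iff_inter_eq_empty, ← not_nonempty_iff_eq_empty]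
        exact fun h => hns (mem_biUnion (Finset.mem_coe.2 hm) ⟨hn, h⟩)
    have hinj : Injective (B ∘ f) := fun i j hij => by
      by_contra hne
      have hd := hf hne
      obtain ⟨z, hz⟩ := (hBcon _ (hfN i)).nonempty
      exact Set.disjoint_left.1 hd hz ((show B (f i) = B (f j) from hij) ▸ hz)
    refine absurd (hY r hr (range (B ∘ f)) ?_ ?_) (infinite_range_of_injective hinj)
    · rintro _ ⟨i, rfl⟩
      exact ⟨hBc _ (hfN i), hBcon _ (hfN i), hBd _ (hfN i)⟩
    · rintro _ ⟨i, rfl⟩ _ ⟨j, rfl⟩ hij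
      exact hf fun h => hij (h ▸ rfl)
  · push Not at hfin
    obtain ⟨m, hm, hinf⟩ := hfin
    exact ⟨B m, hBc m hm, hBcon m hm, hBa m hm, _, sep_subset _ _, hinf,
      fun n hn => hn.2.mono (inter_subset_inter_left _ (hBA n hn.1))⟩

/-- If a closed set with finitely many components meets infinitely many members of a sequence of
sets, then so does one of its components. -/
lemma exists_component_meeting_infinite {X : Type*} [TopologicalSpace X] [CompactSpace X]
    {S : Set X} (hS : IsClosed S) (hfin : {T | ∃ x ∈ S, T = connectedComponentIn S x}.Finite)
    {G : ℕ → Set X} {N : Set ℕ} (hN : N.Infinite) (hG : ∀ n ∈ N, (G n ∩ S).Nonempty) :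
    ∃ K ⊆ S, IsCompact K ∧ IsConnected K ∧ ∃ N' ⊆ N, N'.Infinite ∧
      ∀ n ∈ N', (G n ∩ K).Nonempty := by
  by_contra! h
  refine hN ((hfin.biUnion (t := fun T => {n ∈ N | (G n ∩ T).Nonempty}) ?_).subset ?_)
  · rintro _ ⟨x, hx, rfl⟩
    have hcl : IsClosed (connectedComponentIn S x) := isClosed_of_closure_subset <|
      isPreconnected_connectedComponentIn.closure.subset_connectedComponentIn
        (subset_closure (mem_connectedComponentIn hx))
        (closure_minimal (connectedComponentIn_subset _ _) hS)
    by_contra hinf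
    obtain ⟨n, hn, hne⟩ := h _ (connectedComponentIn_subset S x) hcl.isCompact
      (isConnected_connectedComponentIn_iff.2 hx) _ (sep_subset _ _) hinf
    exact hn.2.ne_empty hne
  · intro n hn
    obtain ⟨x, hxG, hxS⟩ := hG n hn
    exact mem_biUnion (show _ ∈ {T | ∃ x ∈ S, T = connectedComponentIn S x} from ⟨x, hxS, rfl⟩)
      ⟨hn, x, hxG, mem_connectedComponentIn hxS⟩

/-- An unshielded compactum is contained in the closure of a connected open set which it does not
meet. -/
lemma Unshielded.exists_isOpen_isConnected {X : Set ℂ} (hXu : Unshielded X) (hX : IsCompact X) :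
    ∃ U : Set ℂ, IsOpen U ∧ IsConnected U ∧ Disjoint U X ∧ X ⊆ closure U := by
  obtain ⟨R, hR⟩ := hX.isBounded.exists_norm_le
  set L : Set ℂ := (fun t : ℝ => (t : ℂ)) '' Ioi (max R 0)
  have hLX : L ⊆ Xᶜ := by
    rintro _ ⟨t, ht, rfl⟩ htX
    have h := hR _ htX
    have ht' : max R 0 < t := ht
    have := le_max_left R 0
    have := le_abs_self t
    rw [Complex.norm_real, Real.norm_eq_abs] at h
    linarith
  have hLc : IsPreconnected L :=
    isPreconnected_Ioi.image _ Complex.continuous_ofReal.continuousOn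
  set z : ℂ := ((max R 0 + 1 : ℝ) : ℂ)
  have hzL : z ∈ L := ⟨max R 0 + 1, by simp, rfl⟩
  have hzX : z ∈ Xᶜ := hLX hzL
  have hunb : ¬ Bornology.IsBounded (connectedComponentIn Xᶜ z) := fun hb => by
    obtain ⟨M, hM⟩ := (hb.subset (hLc.subset_connectedComponentIn hzL hLX)).exists_norm_le
    have h := hM (((max R 0 + |M| + 1 : ℝ)) : ℂ)
      ⟨_, by rw [mem_Ioi]; linarith [abs_nonneg M], rfl⟩
    rw [Complex.norm_real, Real.norm_eq_abs] at h
    linarith [le_abs_self (max R 0 + |M| + 1), le_max_right R 0, le_abs_self M]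
  refine ⟨connectedComponentIn Xᶜ z, hX.isClosed.isOpen_compl.connectedComponentIn,
    isConnected_connectedComponentIn_iff.2 hzX,
    subset_compl_iff_disjoint_right.1 (connectedComponentIn_subset _ _), ?_⟩
  exact (hXu z hzX hunb).le.trans frontier_subset_closure

/-- Sets converging to `C` eventually contain points whose images under `φ` are close to that of a
given point of `C`. -/
lemma eventually_exists_dist_lt {E Y : Type*} [MetricSpace E] [MetricSpace Y] {X C : Set E}
    {φ : X → Y} (hφ : Continuous φ) {F : ℕ → Set E} (hFX : ∀ n, F n ⊆ X)
    (hF : Tendsto (fun n => hausdorffEDist (F n) C) atTop (nhds 0))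
    {x : X} (hx : (x : E) ∈ C) {r : ℝ} (hr : 0 < r) :
    ∀ᶠ n in atTop, ∃ y ∈ (Subtype.val ⁻¹' F n : Set X), dist (φ y) (φ x) < r := by
  obtain ⟨δ, hδ, h⟩ := Metric.continuous_iff.1 hφ x r hr
  filter_upwards [hF.eventually_lt_const (ENNReal.ofReal_pos.2 hδ)] with n hn
  obtain ⟨y, hy, hxy⟩ := exists_edist_lt_of_hausdorffEDist_lt hx
    (show hausdorffEDist C (F n) < ENNReal.ofReal δ by rw [hausdorffEDist_comm]; exact hn)
  refine ⟨⟨y, hFX n hy⟩, hy, h _ ?_⟩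
  rw [edist_lt_ofReal, dist_comm] at hxy
  exact hxy

/-- a finitely monotone continuous surjection from an unshielded planar
compactum onto a finitely Suslinian compactum collapses every limit continuum to a point. -/
theorem finitely_monotone_collapses_limit_continua
    (X : Set ℂ) (hXc : IsCompact X) (hXu : Unshielded X)
    {Y : Type*} [MetricSpace Y] [CompactSpace Y] (hY : FinSus Y)
    (φ : X → Y) (hφc : Continuous φ) (hφs : Function.Surjective φ)
    (hφfm : ∀ Z : Set Y, IsCompact Z → IsConnected Z →
      {T : Set X | ∃ x ∈ φ ⁻¹' Z, T = connectedComponentIn (φ ⁻¹' Z) x}.Finite)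
    (C : Set ℂ) (hC : LimContIn X C) :
    ∃ y : Y, ∀ x : X, (x : ℂ) ∈ C → φ x = y := by
  obtain ⟨⟨hCX, -, hCc⟩, F, hF, hFd, hFlim⟩ := hC
  obtain ⟨x₀, hx₀⟩ := hCc.nonempty
  refine ⟨φ ⟨x₀, hCX hx₀⟩, fun x hx => ?_⟩
  set x' : X := ⟨x₀, hCX hx₀⟩
  by_contra hne
  have := isCompact_iff_compactSpace.1 hXc
  set r : ℝ := dist (φ x) (φ x') / 8 with hr
  have hr0 : 0 < r := div_pos (dist_pos.2 hne) (by norm_num)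
  let G : ℕ → Set X := fun n => Subtype.val ⁻¹' F n
  have hGF : ∀ n, Subtype.val '' G n = F n := fun n => by
    rw [Subtype.image_preimage_coe, inter_eq_right.2 (hF n).1]
  have hG : ∀ n, IsCompact (G n) := fun n =>
    ((hF n).2.1.isClosed.preimage continuous_subtype_val).isCompact
  have hGc : ∀ n, IsConnected (G n) := fun n => by
    refine ⟨image_nonempty.1 ((hGF n).symm ▸ (hF n).2.2.nonempty),
      IsInducing.subtypeVal.isPreconnected_image.1 ((hGF n).symm ▸ (hF n).2.2.isPreconnected)⟩
  obtain ⟨n₀, hn₀⟩ := eventually_atTop.1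
    ((eventually_exists_dist_lt hφc (fun n => (hF n).1) hFlim hx hr0).and
      (eventually_exists_dist_lt hφc (fun n => (hF n).1) hFlim (x := x') hx₀ hr0))
  have hnear : ∀ n ∈ Ici n₀, ∃ p ∈ φ '' G n, dist p (φ x) < r := fun n hn => by
    obtain ⟨y, hy, h⟩ := (hn₀ n hn).1
    exact ⟨_, mem_image_of_mem φ hy, h⟩
  have hnear' : ∀ n ∈ Ici n₀, ∃ p ∈ φ '' G n, dist p (φ x') < r := fun n hn => by
    obtain ⟨y, hy, h⟩ := (hn₀ n hn).2
    exact ⟨_, mem_image_of_mem φ hy, h⟩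
  have hd : dist (φ x) (φ x') = 8 * r := by rw [hr]; ring
  have hcompact := fun n => (hG n).image hφc
  have hconn := fun n => (hGc n).image φ hφc.continuousOn
  obtain ⟨Z, hZ, hZc, hZa, N₁, hN₁, hN₁i, hN₁Z⟩ := hY.exists_continuum_meeting_infinite
    (Ici_infinite n₀) hcompact hconn hr0 hnear fun n hn => by
      obtain ⟨p, hp, hpa⟩ := hnear' n hn
      exact ⟨p, hp, by linarith [dist_triangle_left (φ x) (φ x') p]⟩
  obtain ⟨Z', hZ', hZc', hZa', N₂, hN₂, hN₂i, hN₂Z⟩ := hY.exists_continuum_meeting_infinite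
    hN₁i hcompact hconn hr0 (fun n hn => hnear' n (hN₁ hn)) fun n hn => by
      obtain ⟨p, hp, hpa⟩ := hnear n (hN₁ hn)
      exact ⟨p, hp, by linarith [dist_triangle_left (φ x) (φ x') p]⟩
  have hZZ' : Disjoint Z Z' := by
    refine (closedBall_disjoint_closedBall ?_).mono hZa hZa'
    linarith
  have hpre : ∀ {n : ℕ} {W : Set Y}, (φ '' G n ∩ W).Nonempty → (G n ∩ φ ⁻¹' W).Nonempty := by
    rintro n W ⟨_, ⟨y, hy, rfl⟩, hW⟩
    exact ⟨y, hy, hW⟩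
  obtain ⟨K₁, hK₁Z, hK₁, hK₁c, N₃, hN₃, hN₃i, hN₃K⟩ := exists_component_meeting_infinite
    (hZ.isClosed.preimage hφc) (hφfm Z hZ hZc) hN₂i fun n hn => hpre (hN₁Z n (hN₂ hn))
  obtain ⟨K₂, hK₂Z, hK₂, hK₂c, N₄, hN₄, hN₄i, hN₄K⟩ := exists_component_meeting_infinite
    (hZ'.isClosed.preimage hφc) (hφfm Z' hZ' hZc') hN₃i fun n hn => hpre (hN₂Z n (hN₃ hn))
  have hK : Disjoint K₁ K₂ := (hZZ'.preimage φ).mono hK₁Z hK₂Z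
  obtain ⟨U, hU, hUc, hUX, hXU⟩ := hXu.exists_isOpen_isConnected hXc
  let e : Fin 3 → ℕ := fun i => hN₄i.natEmbedding _ i
  have heN : ∀ i, e i ∈ N₄ := fun i => (hN₄i.natEmbedding _ i).2
  have he : Injective e := Subtype.val_injective.comp
    ((hN₄i.natEmbedding _).injective.comp Fin.val_injective)
  have hmeet : ∀ {n : ℕ} {K : Set X}, (G n ∩ K).Nonempty →
      (F n ∩ Subtype.val '' K).Nonempty := by
    rintro n K ⟨y, hy, hyK⟩
    exact ⟨y, hy, y, hyK, rfl⟩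
  exact not_three_continua_meet_two hXc hU hUc hUX hXU
    (hK₁.image continuous_subtype_val) (hK₁c.image _ continuous_subtype_val.continuousOn)
    (Subtype.coe_image_subset _ _)
    (hK₂.image continuous_subtype_val) (hK₂c.image _ continuous_subtype_val.continuousOn)
    (Subtype.coe_image_subset _ _)
    ((disjoint_image_iff Subtype.val_injective).2 hK) (F := fun i => F (e i))
    (fun i => (hF _).2.1) (fun i => (hF _).2.2) (fun i => (hF _).1)
    (fun i j hij => hFd (he.ne hij))
    (fun i => hmeet (hN₃K _ (hN₄ (heN i)))) (fun i => hmeet (hN₄K _ (heN i)))
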